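/- Let G be a k-connected (k ≥ 1) finite simple graph with n ≥ 9 vertices, e edges, minimum degree δ, and maximum degree Δ. If Z₁(G) ≥ (n − k − 2)·Δ² + e²/(2(k + 2)) + (k + 2)·Δ³/(2δ), then G is traceable. -/

import Mathlib

open Finset

/-- The first Zagreb index of a graph: the sum of the squares of the vertex degrees. -/
def zagreb1 {V : Type*} [Fintype V] (G : SimpleGraph V) [DecidableRel G.Adj] : ℝ :=
  ∑ u, (G.degree u : ℝ) ^ 2

/-- The forgotten topological index of a graph: the sum of the cubes of the vertex degrees. -/
def forgottenIndex {V : Type*} [Fintype V] (G : SimpleGraph V) [DecidableRel G.Adj] : ℝ :=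
  ∑ u, (G.degree u : ℝ) ^ 3

/-- The inverse degree of a graph: the sum of the reciprocals of the vertex degrees. -/
noncomputable def invDegree {V : Type*} [Fintype V] (G : SimpleGraph V) [DecidableRel G.Adj] : ℝ :=
  ∑ u, 1 / (G.degree u : ℝ)

/-- The independence number of a graph: the largest cardinality of a set of pairwise
nonadjacent vertices. -/
noncomputable def indepNum {V : Type*} [Fintype V] (G : SimpleGraph V) : ℕ :=
  sSup {k | ∃ s : Finset V, s.card = k ∧ ∀ u ∈ s, ∀ v ∈ s, ¬ G.Adj u v}

/-- A graph is a regular balanced bipartite graph if its vertices can be partitioned into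
two parts of equal size with every edge joining the two parts, and all vertices have the
same degree. -/
def IsRegularBalancedBipartite {V : Type*} [Fintype V] (G : SimpleGraph V) [DecidableRel G.Adj] : Prop :=
  ∃ (A : Finset V) (r : ℕ), 2 * A.card = Fintype.card V ∧
    (∀ u v, G.Adj u v → (u ∈ A ↔ v ∉ A)) ∧ G.IsRegularOfDegree r

/-- A graph is `k`-connected if it has more than `k` vertices and removing any set of
fewer than `k` vertices leaves a connected graph. -/
def IsKConnected {V : Type*} [Fintype V] (G : SimpleGraph V) (k : ℕ) : Prop :=
  k < Fintype.card V ∧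
    ∀ S : Finset V, S.card < k → (G.induce (↑S : Set V)ᶜ).Connected

/-- A graph is traceable if it has a Hamiltonian path. -/
def IsTraceable {V : Type*} [DecidableEq V] (G : SimpleGraph V) : Prop :=
  ∃ (u v : V) (p : G.Walk u v), p.IsHamiltonian

namespace SimpleGraph

variable {V : Type*} {G : SimpleGraph V}

/-- A list of vertices that traverses a path of maximum length in `G`. -/
structure IsLongestPathList (G : SimpleGraph V) (P : List V) : Prop where
  isChain : P.IsChain G.Adj
  nodup : P.Nodup
  length_le : ∀ Q : List V, Q.IsChain G.Adj → Q.Nodup → Q.length ≤ P.length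

/-- `a` and `b` are joined by a path of `G` that avoids the list `P`. -/
def LinkedOff (G : SimpleGraph V) (P : List V) (a b : V) : Prop :=
  ∃ L : List V, L.IsChain G.Adj ∧ L.Nodup ∧ P.Disjoint L ∧ L.head? = some a ∧ L.getLast? = some b

theorem exists_isLongestPathList [Fintype V] (G : SimpleGraph V) :
    ∃ P : List V, IsLongestPathList G P := by
  classical
  let p : ℕ → Prop := fun m => ∃ P : List V, P.IsChain G.Adj ∧ P.Nodup ∧ P.length = m
  have hp0 : p 0 := ⟨[], by simp⟩
  obtain ⟨P, hP, hPn, hPl⟩ := Nat.findGreatest_spec (Nat.zero_le (Fintype.card V)) hp0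
  exact ⟨P, hP, hPn, fun Q hQ hQn =>
    hPl ▸ Nat.le_findGreatest hQn.length_le_card ⟨Q, hQ, hQn, rfl⟩⟩

theorem isChain_adj_reverse {l : List V} (h : l.IsChain G.Adj) : l.reverse.IsChain G.Adj := by
  rw [List.isChain_reverse]
  exact h.imp fun _ _ => Adj.symm

theorem getLast?_take_succ {l : List V} {i : ℕ} (hi : i < l.length) :
    (l.take (i + 1)).getLast? = some l[i] := by
  simp [List.getLast?_take, hi]

theorem head?_drop {l : List V} {i : ℕ} (hi : i < l.length) : (l.drop i).head? = some l[i] := by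
  simp [hi]

namespace IsLongestPathList

variable {P : List V}

/-- No detour through vertices off a longest path can be spliced into it, even after reversing
a segment. -/
theorem not_isChain_splice (hP : IsLongestPathList G P) {A B C L : List V} (hABC : P = A ++ B ++ C)
    (hne : L ≠ []) (hL : L.Nodup) (hd : P.Disjoint L) :
    ¬ (A ++ L ++ B.reverse ++ C).IsChain G.Adj := by
  intro hc
  have hperm : (A ++ L ++ B.reverse ++ C).Perm (P ++ L) := by
    classical
    rw [List.perm_iff_count]
    intro a
    simp only [hABC, List.count_append, List.count_reverse]
    omega
  have h := hP.length_le _ hc (hperm.nodup_iff.2 (hP.nodup.append hL hd))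
  rw [hperm.length_eq, List.length_append] at h
  exact hne (List.length_eq_zero_iff.1 (by omega))

theorem ne_nil [Nonempty V] (hP : IsLongestPathList G P) : P ≠ [] := by
  rintro rfl
  have := hP.length_le [Classical.arbitrary V] (by simp) (by simp)
  simp at this

theorem not_adj_head (hP : IsLongestPathList G P) {h : V} (hh : h ∉ P) (h0 : 0 < P.length) :
    ¬ G.Adj h P[0] := by
  intro hadj
  refine hP.not_isChain_splice (A := []) (B := []) (C := P) (L := [h]) (by simp) (by simp) (by simp)
    (by simpa using hh) ?_
  have e1 : P.head? = some P[0] := by rw [List.head?_eq_getElem?, List.getElem?_eq_getElem h0]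
  simp [List.isChain_cons, hP.isChain, e1, hadj]

theorem not_adj_last (hP : IsLongestPathList G P) {h : V} (hh : h ∉ P) (h0 : P.length - 1 < P.length) :
    ¬ G.Adj P[P.length - 1] h := by
  intro hadj
  refine hP.not_isChain_splice (A := P) (B := []) (C := []) (L := [h]) (by simp) (by simp) (by simp)
    (by simpa using hh) ?_
  have e1 : P.getLast? = some P[P.length - 1] := by
    rw [List.getLast?_eq_getElem?, List.getElem?_eq_getElem h0]
  simp [List.isChain_append, hP.isChain, e1, hadj]

theorem not_adj_consecutive (hP : IsLongestPathList G P) {a b : V} (hab : LinkedOff G P a b)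
    {i : ℕ} (hi : i + 1 < P.length) (ha : G.Adj P[i] a) : ¬ G.Adj b P[i + 1] := by
  intro hb
  obtain ⟨L, hLc, hLn, hd, hLh, hLl⟩ := hab
  refine hP.not_isChain_splice (A := P.take (i + 1)) (B := []) (C := P.drop (i + 1)) (L := L)
    (by simp) (by grind) hLn hd ?_
  have e1 := getLast?_take_succ (i := i) (l := P) (by omega)
  have e2 := head?_drop hi
  simp [List.isChain_append, hP.isChain.take, hP.isChain.drop, hLc, hLh, hLl, e1, e2, ha, hb]

theorem not_adj_head_succ (hP : IsLongestPathList G P) {h : V} (hh : h ∉ P)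
    {i : ℕ} (hi : i + 1 < P.length) (ha : G.Adj P[i] h) : ¬ G.Adj P[0] P[i + 1] := by
  intro hb
  refine hP.not_isChain_splice (A := []) (B := P.take (i + 1)) (C := P.drop (i + 1)) (L := [h])
    (by simp) (by simp) (by simp) (by simpa using hh) ?_
  have e1 := getLast?_take_succ (i := i) (l := P) (by omega)
  have e2 := head?_drop hi
  have e3 : P.head? = some P[0] := by
    rw [List.head?_eq_getElem?, List.getElem?_eq_getElem (by omega)]
  simp [List.isChain_append, List.isChain_cons, hP.isChain.drop,
    isChain_adj_reverse (hP.isChain.take (i + 1)), List.head?_take, e1, e2, e3, ha.symm, hb]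

theorem not_adj_succ_succ (hP : IsLongestPathList G P) {a b : V} (hab : LinkedOff G P a b)
    {i j : ℕ} (hij : i < j) (hj : j + 1 < P.length) (ha : G.Adj P[i] a) (hb : G.Adj b P[j]) :
    ¬ G.Adj P[i + 1] P[j + 1] := by
  intro hs
  obtain ⟨L, hLc, hLn, hd, hLh, hLl⟩ := hab
  refine hP.not_isChain_splice (A := P.take (i + 1)) (B := (P.take (j + 1)).drop (i + 1))
    (C := P.drop (j + 1)) (L := L) ?_ (by grind) hLn hd ?_
  · conv_lhs =>
      rw [← List.take_append_drop (j + 1) P, ← List.take_append_drop (i + 1) (P.take (j + 1))]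
    rw [List.take_take, min_eq_left (by omega)]
  have e1 := getLast?_take_succ (i := i) (l := P) (by omega)
  have e2 := head?_drop hj
  have e3 : ((P.take (j + 1)).drop (i + 1)).head? = some P[i + 1] := by
    rw [head?_drop (by simp; omega), List.getElem_take]
  have e4 : ((P.take (j + 1)).drop (i + 1)).getLast? = some P[j] := by
    rw [List.getLast?_drop, getLast?_take_succ, if_neg (by simp; omega)]
  simp only [List.isChain_append, hP.isChain.take, hP.isChain.drop, hLc,
    isChain_adj_reverse ((hP.isChain.take (j + 1)).drop (i + 1)), List.getLast?_append,
    List.getLast?_reverse, List.head?_reverse, hLh, hLl, e1, e2, e3, e4]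
  simp [ha, hb, hs]

end IsLongestPathList

theorem LinkedOff.of_reachable {P : List V} {a b : V} {ha : a ∉ P} {hb : b ∉ P}
    (h : (G.induce {v | v ∉ P}).Reachable ⟨a, ha⟩ ⟨b, hb⟩) : LinkedOff G P a b := by
  classical
  obtain ⟨p⟩ := h
  obtain ⟨q, hq⟩ := p.toPath
  refine ⟨q.support.map Subtype.val, ?_, hq.support_nodup.map Subtype.val_injective, ?_, ?_, ?_⟩
  · exact List.isChain_map_of_isChain Subtype.val (fun _ _ h => h) q.isChain_adj_support
  · intro v hv hv'
    obtain ⟨w, -, rfl⟩ := List.mem_map.1 hv'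
    exact w.2 hv
  · rw [List.head?_map, List.head?_eq_some_head q.support_ne_nil, q.head_support]
    rfl
  · rw [List.getLast?_map, List.getLast?_eq_some_getLast q.support_ne_nil, q.getLast_support]
    rfl

end SimpleGraph

open SimpleGraph

/-- A property closed under adjacency outside fewer than `k` vertices is constant there. -/
theorem IsKConnected.propagate {V : Type*} [Fintype V] {G : SimpleGraph V} {k : ℕ}
    (hG : IsKConnected G k) {S : Finset V} (hS : S.card < k) {Q : V → Prop}
    (hQ : ∀ a b, a ∉ S → b ∉ S → G.Adj a b → Q a → Q b) {a b : V} (ha : a ∉ S) (hb : b ∉ S)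
    (hQa : Q a) : Q b := by
  obtain ⟨p⟩ := (hG.2 S hS).preconnected ⟨a, by simpa using ha⟩ ⟨b, by simpa using hb⟩
  suffices ∀ (x y : ((↑S : Set V)ᶜ : Set V)), (G.induce (↑S : Set V)ᶜ).Walk x y → Q x → Q y from
    this _ _ p hQa
  intro x y p hx
  induction p with
  | nil => exact hx
  | @cons a b _ h _ ih => exact ih (hQ _ _ a.2 b.2 h hx)

/-- The Chvátal–Erdős construction: a vertex off a longest path of a `k`-connected graph lies,
together with the first vertex of the path, in an independent set of size `k + 2`. -/
theorem IsKConnected.exists_isIndepSet {V : Type*} [Fintype V] {G : SimpleGraph V}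
    {k : ℕ} (hG : IsKConnected G k) {P : List V} (hP : IsLongestPathList G P) (h0 : 0 < P.length)
    {x : V} (hx : x ∉ P) :
    ∃ J : Finset V, J.card = k + 2 ∧ x ∈ J ∧ P[0] ∈ J ∧ ∀ u ∈ J, ∀ v ∈ J, ¬ G.Adj u v := by
  classical
  let H : V → Prop := fun v => ∃ hv : v ∉ P, (G.induce {v | v ∉ P}).Reachable ⟨x, hx⟩ ⟨v, hv⟩
  have hxH : H x := ⟨hx, Reachable.refl _⟩
  have hoff : ∀ {a}, H a → a ∉ P := fun h => h.1
  have hlink : ∀ {a b}, H a → H b → LinkedOff G P a b := by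
    rintro a b ⟨ha, ha'⟩ ⟨hb, hb'⟩
    exact .of_reachable (ha'.symm.trans hb')
  have hstep : ∀ {a b}, H a → G.Adj a b → b ∉ P → H b := by
    rintro a b ⟨ha, ha'⟩ hab hb
    refine ⟨hb, ha'.trans (Adj.reachable ?_)⟩
    exact hab
  let T : Finset (Fin P.length) := {i | ∃ a, H a ∧ G.Adj P[i] a}
  have hTlast : ∀ i ∈ T, i.1 + 1 < P.length := by
    intro i hi
    obtain ⟨a, ha, hadj⟩ := (Finset.mem_filter.1 hi).2
    by_contra hlt
    have hi' : i.1 = P.length - 1 := by omega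
    refine hP.not_adj_last (hoff ha) (by omega) ?_
    simpa only [← hi', Fin.getElem_fin] using hadj
  have hTcard : k ≤ T.card := by
    by_contra! hlt
    have hS : (T.image fun i => P[i]).card < k := Finset.card_image_le.trans_lt hlt
    have hxS : x ∉ T.image fun i => P[i] := by
      intro h
      obtain ⟨i, -, hi⟩ := Finset.mem_image.1 h
      exact hx (hi ▸ List.getElem_mem _)
    have h0S : P[0] ∉ T.image fun i => P[i] := by
      intro h
      obtain ⟨i, hi, hi0⟩ := Finset.mem_image.1 h
      obtain ⟨a, ha, hadj⟩ := (Finset.mem_filter.1 hi).2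
      exact hP.not_adj_head (hoff ha) h0 (hi0 ▸ hadj).symm
    refine hoff (hG.propagate hS (Q := H) ?_ hxS h0S hxH) (List.getElem_mem _)
    intro a b _ hb hab ha
    refine hstep ha hab fun hbP => hb ?_
    obtain ⟨i, hi, rfl⟩ := List.getElem_of_mem hbP
    exact Finset.mem_image.2 ⟨⟨i, hi⟩, by simpa [T] using ⟨a, ha, hab.symm⟩, rfl⟩
  obtain ⟨T', hT'T, hT'card⟩ := Finset.exists_subset_card_eq hTcard
  let s : T' → V := fun i => P[i.1.1 + 1]'(hTlast _ (hT'T i.2))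
  have hs : Function.Injective s := by
    intro i j hij
    have := (hP.nodup.getElem_inj_iff).1 hij
    exact Subtype.ext (Fin.ext (by omega))
  have hT' : ∀ i : T', ∃ a, H a ∧ G.Adj P[i.1.1] a := fun i => (Finset.mem_filter.1 (hT'T i.2)).2
  have hxs : ∀ i, ¬ G.Adj x (s i) := by
    intro i
    obtain ⟨a, ha, hadj⟩ := hT' i
    exact hP.not_adj_consecutive (hlink ha hxH) _ hadj
  have h0s : ∀ i, ¬ G.Adj P[0] (s i) := by
    intro i
    obtain ⟨a, ha, hadj⟩ := hT' i
    exact hP.not_adj_head_succ (hoff ha) _ hadj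
  have hlt : ∀ i j : T', i.1.1 < j.1.1 → ¬ G.Adj (s i) (s j) := by
    intro i j hij
    obtain ⟨a, ha, hadja⟩ := hT' i
    obtain ⟨b, hb, hadjb⟩ := hT' j
    exact hP.not_adj_succ_succ (hlink ha hb) hij _ hadja hadjb.symm
  have hss : ∀ i j, ¬ G.Adj (s i) (s j) := by
    intro i j h
    rcases lt_trichotomy i.1.1 j.1.1 with hij | hij | hij
    · exact hlt i j hij h
    · obtain rfl : i = j := Subtype.ext (Fin.ext hij)
      exact G.irrefl h
    · exact hlt j i hij h.symm
  have hx0 : ¬ G.Adj x P[0] := hP.not_adj_head hx h0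
  have hsP : ∀ i, s i ∈ P := fun i => List.getElem_mem _
  have h0img : P[0] ∉ Finset.univ.image s := by
    intro h
    obtain ⟨i, -, hi⟩ := Finset.mem_image.1 h
    have := (hP.nodup.getElem_inj_iff).1 hi
    omega
  have hximg : x ∉ insert P[0] (Finset.univ.image s) := by
    intro h
    rcases Finset.mem_insert.1 h with h | h
    · exact hx (h ▸ List.getElem_mem _)
    · obtain ⟨i, -, hi⟩ := Finset.mem_image.1 h
      exact hx (hi ▸ hsP i)
  refine ⟨insert x (insert P[0] (Finset.univ.image s)), ?_, by simp, by simp, ?_⟩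
  · rw [Finset.card_insert_of_notMem hximg, Finset.card_insert_of_notMem h0img,
      Finset.card_image_of_injective _ hs]
    simp [hT'card]
  · intro u hu v hv
    simp only [Finset.mem_insert, Finset.mem_image, Finset.mem_univ, true_and] at hu hv
    rcases hu with hu | hu | ⟨i, hu⟩ <;> rcases hv with hv | hv | ⟨j, hv⟩ <;> subst u v
    · exact G.irrefl
    · exact hx0
    · exact hxs j
    · exact fun h => hx0 h.symm
    · exact G.irrefl
    · exact h0s j
    · exact fun h => hxs i h.symm
    · exact fun h => h0s i h.symm
    · exact hss i j

section Counting

variable {V : Type*} [Fintype V] [DecidableEq V] {G : SimpleGraph V} [DecidableRel G.Adj]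
  {J : Finset V}

theorem card_biUnion_incidenceFinset (hJ : ∀ u ∈ J, ∀ v ∈ J, ¬ G.Adj u v) :
    (J.biUnion fun u => G.incidenceFinset u).card = ∑ u ∈ J, G.degree u := by
  rw [Finset.card_biUnion]
  · simp
  · intro u hu v hv huv
    refine Finset.disjoint_left.2 ?_
    intro e he he'
    rw [mem_incidenceFinset] at he he'
    exact hJ u hu v hv (G.adj_of_mem_incidenceSet huv he he')

theorem biUnion_incidenceFinset_subset :
    (J.biUnion fun u => G.incidenceFinset u) ⊆ G.edgeFinset :=
  Finset.biUnion_subset.2 fun u _ => G.incidenceFinset_subset u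

theorem sum_degree_le_card_edgeFinset (hJ : ∀ u ∈ J, ∀ v ∈ J, ¬ G.Adj u v) :
    ∑ u ∈ J, G.degree u ≤ G.edgeFinset.card := by
  rw [← card_biUnion_incidenceFinset hJ]
  exact Finset.card_le_card biUnion_incidenceFinset_subset

/-- If the degrees of an independent set add up to the number of edges, then every edge has
exactly one end in it. -/
theorem mem_iff_notMem_of_adj (hJ : ∀ u ∈ J, ∀ v ∈ J, ¬ G.Adj u v)
    (hsum : G.edgeFinset.card ≤ ∑ u ∈ J, G.degree u) {a b : V} (hab : G.Adj a b) :
    a ∈ J ↔ b ∉ J := by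
  refine ⟨fun ha hb => hJ a ha b hb hab, fun hb => ?_⟩
  rw [← card_biUnion_incidenceFinset hJ] at hsum
  have hmem : s(a, b) ∈ G.edgeFinset := by simpa using hab
  rw [← Finset.eq_of_subset_of_card_le biUnion_incidenceFinset_subset hsum, Finset.mem_biUnion] at hmem
  obtain ⟨u, hu, he⟩ := hmem
  rw [mem_incidenceFinset] at he
  rcases Sym2.mem_iff.1 he.2 with rfl | rfl
  · exact hu
  · exact absurd hu hb

/-- The Zagreb bound forces the independent set `J` to be one side of a balanced
bipartition. -/
theorem balanced_bipartition_of_zagreb1_ge (hJ : ∀ u ∈ J, ∀ v ∈ J, ¬ G.Adj u v)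
    (hJpos : 0 < J.card) (hδ : 0 < G.minDegree)
    (h : ((Fintype.card V : ℝ) - J.card) * (G.maxDegree : ℝ) ^ 2
        + (G.edgeFinset.card : ℝ) ^ 2 / (2 * (J.card : ℝ))
        + (J.card : ℝ) * (G.maxDegree : ℝ) ^ 3 / (2 * G.minDegree) ≤ zagreb1 G) :
    Fintype.card V = 2 * J.card ∧ ∀ a b, G.Adj a b → (a ∈ J ↔ b ∉ J) := by
  have hle : G.minDegree ≤ G.maxDegree := by
    obtain ⟨u, -⟩ := Finset.card_pos.1 hJpos
    exact (G.minDegree_le_degree u).trans (G.degree_le_maxDegree u)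
  have hsum := sum_degree_le_card_edgeFinset hJ
  have hsumR : ∑ u ∈ J, (G.degree u : ℝ) ≤ G.edgeFinset.card := by exact_mod_cast hsum
  have hd : ∀ u, (G.degree u : ℝ) ≤ G.maxDegree := fun u => by
    exact_mod_cast G.degree_le_maxDegree u
  have hcompl : ∑ u ∈ Jᶜ, (G.degree u : ℝ) ^ 2 ≤
      ((Fintype.card V : ℝ) - J.card) * (G.maxDegree : ℝ) ^ 2 := by
    calc ∑ u ∈ Jᶜ, (G.degree u : ℝ) ^ 2 ≤ ∑ u ∈ Jᶜ, (G.maxDegree : ℝ) ^ 2 :=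
          Finset.sum_le_sum fun u _ => pow_le_pow_left₀ (by positivity) (hd u) 2
      _ = _ := by
        rw [Finset.sum_const, nsmul_eq_mul, Finset.card_compl, Nat.cast_sub J.card_le_univ]
  have hsq : ∑ u ∈ J, (G.degree u : ℝ) ^ 2 ≤ G.maxDegree * ∑ u ∈ J, (G.degree u : ℝ) := by
    rw [Finset.mul_sum]
    refine Finset.sum_le_sum fun u _ => ?_
    rw [sq]
    exact mul_le_mul_of_nonneg_right (hd u) (by positivity)
  have hsplit : zagreb1 G = ∑ u ∈ J, (G.degree u : ℝ) ^ 2 + ∑ u ∈ Jᶜ, (G.degree u : ℝ) ^ 2 :=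
    (Finset.sum_add_sum_compl J _).symm
  set D : ℝ := (G.maxDegree : ℝ) with hD
  set d : ℝ := (G.minDegree : ℝ) with hd'
  set e : ℝ := (G.edgeFinset.card : ℝ) with he
  set K : ℝ := (J.card : ℝ) with hK
  have hKpos : 0 < K := Nat.cast_pos.2 hJpos
  have hdpos : 0 < d := Nat.cast_pos.2 hδ
  have hdD : d ≤ D := Nat.cast_le.2 hle
  have hDpos : 0 < D := hdpos.trans_le hdD
  have hmain : e ^ 2 / (2 * K) + K * D ^ 3 / (2 * d) ≤ D * e := by
    have : D * ∑ u ∈ J, (G.degree u : ℝ) ≤ D * e := by gcongr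
    linarith
  have hamgm : e ^ 2 / (2 * K) + K * D ^ 2 / 2 - D * e = (e - K * D) ^ 2 / (2 * K) := by
    field_simp
    ring
  have hcubic : K * D ^ 3 / (2 * d) - K * D ^ 2 / 2 = K * D ^ 2 * (D - d) / (2 * d) := by
    field_simp
  have hsq0 : 0 ≤ (e - K * D) ^ 2 / (2 * K) := by positivity
  have hcub0 : 0 ≤ K * D ^ 2 * (D - d) / (2 * d) :=
    div_nonneg (mul_nonneg (by positivity) (by linarith)) (by positivity)
  have heKD : e = K * D := by
    have hz : (e - K * D) ^ 2 / (2 * K) = 0 := by linarith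
    have : (e - K * D) ^ 2 = 0 := by
      rcases div_eq_zero_iff.1 hz with h | h
      · exact h
      · linarith
    linarith [pow_eq_zero_iff (two_ne_zero) |>.1 this]
  have hDd : D = d := by
    have hz : K * D ^ 2 * (D - d) / (2 * d) = 0 := by linarith
    rcases div_eq_zero_iff.1 hz with h | h
    · rcases mul_eq_zero.1 h with h | h
      · exact absurd h (by positivity)
      · linarith
    · linarith
  have hreg : ∀ u, G.degree u = G.maxDegree := fun u => by
    have : G.maxDegree = G.minDegree := Nat.cast_injective hDd
    exact le_antisymm (G.degree_le_maxDegree u) (this ▸ G.minDegree_le_degree u)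
  have heN : G.edgeFinset.card = J.card * G.maxDegree := by
    rw [he, hK, hD] at heKD
    exact_mod_cast heKD
  constructor
  · have h2 := G.sum_degrees_eq_twice_card_edges
    simp only [hreg, Finset.sum_const, smul_eq_mul, Finset.card_univ, heN, ← mul_assoc] at h2
    exact Nat.eq_of_mul_eq_mul_right (hδ.trans_le hle) h2
  · exact fun a b hab => mem_iff_notMem_of_adj hJ (by simp [hreg, heN]) hab

end Counting

/-- If one side `J` of a bipartition contains the first vertex of a path and a vertex off the path,
while the path covers the other side, then `J` is the larger side. -/
theorem card_compl_lt_of_isChain {V : Type*} [Fintype V] [DecidableEq V] {G : SimpleGraph V}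
    {J : Finset V} {P : List V} (hP : P.IsChain G.Adj) (hPn : P.Nodup) (h0 : 0 < P.length)
    (hbip : ∀ a b, G.Adj a b → (a ∈ J ↔ b ∉ J)) (h0J : P[0] ∈ J) {x : V} (hx : x ∉ P) (hxJ : x ∈ J)
    (hcover : ∀ v, v ∉ J → v ∈ P) : Jᶜ.card < J.card := by
  have hpred : ∀ v ∈ Jᶜ, ∃ i, ∃ hi : i + 1 < P.length, P[i + 1] = v := by
    intro v hv
    rw [Finset.mem_compl] at hv
    obtain ⟨i, hi, rfl⟩ := List.getElem_of_mem (hcover v hv)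
    cases i with
    | zero => exact absurd h0J hv
    | succ i => exact ⟨i, hi, rfl⟩
  choose! f hf hfv using hpred
  have hxcard : (J.erase x).card < J.card := Finset.card_erase_lt_of_mem hxJ
  refine lt_of_le_of_lt ?_ hxcard
  refine Finset.card_le_card_of_injOn (fun v => P.getD (f v) x) ?_ ?_
  · intro v hv
    have hlt := hf v hv
    have hadj := hP.getElem (f v) hlt
    have hmem : P[f v] ∈ J := (hbip _ _ hadj).2 (by rw [hfv v hv]; exact Finset.mem_compl.1 hv)
    have heq : P.getD (f v) x = P[f v] := List.getD_eq_getElem _ _ _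
    simp only [heq, Finset.coe_erase]
    exact ⟨hmem, fun h => hx (h ▸ List.getElem_mem _)⟩
  · intro v hv w hw hvw
    have hv' := hf v hv
    have hw' := hf w hw
    have e1 : P.getD (f v) x = P[f v] := List.getD_eq_getElem _ _ _
    have e2 : P.getD (f w) x = P[f w] := List.getD_eq_getElem _ _ _
    simp only [e1, e2] at hvw
    have := (hPn.getElem_inj_iff).1 hvw
    rw [← hfv v hv, ← hfv w hw]
    simp only [this]

/-- If `G` is a `k`-connected (`k ≥ 1`) graph with `n ≥ 9` vertices, `e` edges, minimum
degree `δ`, and maximum degree `Δ`, and `Z₁(G) ≥ (n − k − 2)Δ² + e²/(2(k+2)) + (k+2)Δ³/(2δ)`,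
then `G` is traceable. -/
theorem stmt11 {V : Type*} [Fintype V] [DecidableEq V] (G : SimpleGraph V) [DecidableRel G.Adj]
    (k : ℕ) (hk : 1 ≤ k) (hconn : IsKConnected G k) (hn : 9 ≤ Fintype.card V)
    (h : zagreb1 G ≥ ((Fintype.card V : ℝ) - k - 2) * (G.maxDegree : ℝ) ^ 2
        + (G.edgeFinset.card : ℝ) ^ 2 / (2 * ((k : ℝ) + 2))
        + ((k : ℝ) + 2) * (G.maxDegree : ℝ) ^ 3 / (2 * G.minDegree)) :
    IsTraceable G := by
  have hVpos : 0 < Fintype.card V := by omega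
  have : Nonempty V := Fintype.card_pos_iff.1 hVpos
  have : Nontrivial V := Fintype.one_lt_card_iff_nontrivial.1 (by omega)
  have hpropagate : ∀ {Q : V → Prop}, (∀ a b, G.Adj a b → Q a → Q b) → ∀ {a b}, Q a → Q b :=
    fun hQ _ _ => hconn.propagate (S := ∅) hk (fun a b _ _ => hQ a b)
      (by simp) (by simp)
  have hpre : G.Preconnected := fun a b =>
    hpropagate (Q := G.Reachable a) (fun _ _ hab ha => ha.trans hab.reachable) (Reachable.refl a)
  have hδ : 0 < G.minDegree := hpre.minDegree_pos_of_nontrivial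
  obtain ⟨P, hP⟩ := exists_isLongestPathList G
  have hne := hP.ne_nil
  have h0 : 0 < P.length := List.length_pos_iff.2 hne
  by_cases hall : ∀ x, x ∈ P
  · refine ⟨_, _, Walk.ofSupport P hne hP.isChain, fun a => ?_⟩
    rw [Walk.support_ofSupport]
    exact List.count_eq_one_of_mem hP.nodup (hall a)
  exfalso
  push Not at hall
  have hside : ∀ x, x ∉ P → ∃ J : Finset V, x ∈ J ∧ P[0] ∈ J ∧ Fintype.card V = 2 * J.card ∧
      ∀ a b, G.Adj a b → (a ∈ J ↔ b ∉ J) := by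
    intro x hx
    obtain ⟨J, hJc, hxJ, h0J, hJ⟩ := hconn.exists_isIndepSet hP h0 hx
    refine ⟨J, hxJ, h0J, balanced_bipartition_of_zagreb1_ge hJ (by omega) hδ ?_⟩
    rw [hJc]
    push_cast
    rw [← sub_sub]
    exact h
  obtain ⟨x, hx⟩ := hall
  obtain ⟨J, hxJ, h0J, hcard, hbip⟩ := hside x hx
  have hcover : ∀ v, v ∉ J → v ∈ P := by
    intro v hvJ
    by_contra hv
    obtain ⟨J', hvJ', h0J', -, hbip'⟩ := hside v hv
    have hagree : v ∈ J ↔ v ∈ J' := by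
      refine hpropagate (Q := fun w => w ∈ J ↔ w ∈ J') ?_ (iff_of_true h0J h0J')
      intro a b hab hQ
      have h1 := hbip a b hab
      have h2 := hbip' a b hab
      tauto
    exact hvJ (hagree.2 hvJ')
  have hlt := card_compl_lt_of_isChain hP.isChain hP.nodup h0 hbip h0J hx hxJ hcover
  rw [Finset.card_compl] at hlt
  omega
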